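/- Let 2 ≤ t ≤ |B| and suppose C = {j_1, …, j_{t−1}} ⊆ A. If g(C) ≥ α·p_{j_t}, then j_s ∉ A (i.e., μ_{j_s} = 0) for every s ∈ {t, t+1, …, |B|}; consequently A = C. -/

import Mathlib

/-- The feasible set `C₁`: probability vectors `q` with `q 0 ≥ α * q k` for all `k ≠ 0`.
(Index `0` plays the role of the index `1` of the paper.) -/
def C1 (N : ℕ) [NeZero N] (α : ℝ) : Set (Fin N → ℝ) :=
  {q | (∀ i, 0 ≤ q i) ∧ (∑ i, q i = 1) ∧ ∀ k, k ≠ 0 → α * q k ≤ q 0}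

/-- `KL(q‖p) = ∑ i, q i * log (q i / p i)`, with the convention `0 * log 0 = 0`
(automatic here since `Real.log 0 = 0`). -/
noncomputable def KLv {N : ℕ} (q p : Fin N → ℝ) : ℝ :=
  ∑ i, q i * Real.log (q i / p i)

/-- `g(S) = (p 0 ^ α * ∏_{j ∈ S} α * p j) ^ (1 / (|S| + α))`. -/
noncomputable def gfun {N : ℕ} [NeZero N] (α : ℝ) (p : Fin N → ℝ) (S : Finset (Fin N)) : ℝ :=
  (p 0 ^ α * ∏ j ∈ S, α * p j) ^ ((1 : ℝ) / ((S.card : ℝ) + α))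

/-!
Put `θ = p o * exp (∑ μ)`, the sum running over all indices other than the marked index `o`.
Stationarity and complementary slackness say that `α * p j = θ * exp (α * μ j)` for every active
`j`, so an active `j` satisfies `θ < α * p j`. Multiplying these identities over a set `S` of
active indices gives `g S ^ (|S| + α) = θ ^ (|S| + α) * exp (-α * ∑_{k ∉ S ∪ {o}} μ k)`,
whence `g S ≤ θ`. Thus every `k ≠ o` with `α * p k ≤ g S` is inactive.
-/

section

open Finset Real

/-- `g(S)` over an arbitrary index type with a marked index `o`; on `Fin N` with `o = 0` it is
`gfun` by definition. -/
noncomputable def mergedMean {ι : Type*} (o : ι) (α : ℝ) (p : ι → ℝ) (S : Finset ι) : ℝ :=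
  (p o ^ α * ∏ j ∈ S, α * p j) ^ ((1 : ℝ) / ((#S : ℝ) + α))

variable {ι : Type*} [Fintype ι] [DecidableEq ι] {o : ι} {α l : ℝ} {p q μ : ι → ℝ}

/-- The reals `l` and `μ` are KKT multipliers at `q` for minimizing `KL(q‖p)` subject to
`∑ i, q i = 1` and `α * q k ≤ q o` for `k ≠ o`: dual feasibility, stationarity and complementary
slackness. Feasibility of `q` is not part of the notion, and `μ o` is meaningless. -/
structure IsKKTMultiplier (o : ι) (α : ℝ) (p q : ι → ℝ) (l : ℝ) (μ : ι → ℝ) : Prop where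
  nonneg : ∀ j, j ≠ o → 0 ≤ μ j
  stationary_marked : q o = p o * exp ((∑ k ∈ univ.erase o, μ k) - 1 - l)
  stationary : ∀ j, j ≠ o → q j = p j * exp (-(α * μ j) - 1 - l)
  slackness : ∀ j, j ≠ o → μ j * (α * q j - q o) = 0

/-- The active set `A`: the constraints with a positive multiplier. -/
noncomputable def activeSet (o : ι) (μ : ι → ℝ) : Finset ι :=
  univ.filter fun j => j ≠ o ∧ 0 < μ j

/-- The set `B` of constraints that the reference weights `p` violate. -/
noncomputable def violatedSet (o : ι) (α : ℝ) (p : ι → ℝ) : Finset ι :=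
  univ.filter fun j => j ≠ o ∧ p o < α * p j

/-- The threshold `θ`, which `α * p j` exceeds when `j` is active. -/
noncomputable def activityThreshold (o : ι) (p μ : ι → ℝ) : ℝ :=
  p o * exp (∑ k ∈ univ.erase o, μ k)

lemma mem_activeSet {j : ι} : j ∈ activeSet o μ ↔ j ≠ o ∧ 0 < μ j := by
  simp [activeSet]

lemma mem_violatedSet {j : ι} : j ∈ violatedSet o α p ↔ j ≠ o ∧ p o < α * p j := by
  simp [violatedSet]

lemma activeSet_subset_erase : activeSet o μ ⊆ univ.erase o := fun _ hj =>
  mem_erase.2 ⟨(mem_activeSet.1 hj).1, mem_univ _⟩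

lemma activityThreshold_pos (ho : 0 < p o) : 0 < activityThreshold o p μ :=
  mul_pos ho (exp_pos _)

lemma activityThreshold_rpow (ho : 0 ≤ p o) :
    activityThreshold o p μ ^ α = p o ^ α * exp (α * ∑ k ∈ univ.erase o, μ k) := by
  rw [activityThreshold, mul_rpow ho (exp_pos _).le, ← exp_mul, mul_comm α]

namespace IsKKTMultiplier

lemma le_activityThreshold (h : IsKKTMultiplier o α p q l μ) (ho : 0 ≤ p o) :
    p o ≤ activityThreshold o p μ :=
  le_mul_of_one_le_right ho <| one_le_exp <|
    sum_nonneg fun k hk => h.nonneg k (ne_of_mem_erase hk)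

lemma mul_eq_activityThreshold_mul_exp (h : IsKKTMultiplier o α p q l μ) {j : ι}
    (hj : j ∈ activeSet o μ) : α * p j = activityThreshold o p μ * exp (α * μ j) := by
  obtain ⟨hjo, hμj⟩ := mem_activeSet.1 hj
  have tight : α * q j = q o :=
    sub_eq_zero.1 ((mul_eq_zero.1 (h.slackness j hjo)).resolve_left hμj.ne')
  calc α * p j = α * q j * exp (α * μ j + 1 + l) := by
        rw [h.stationary j hjo, mul_assoc, mul_assoc, ← exp_add,
          show -(α * μ j) - 1 - l + (α * μ j + 1 + l) = 0 by ring, exp_zero, mul_one]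
    _ = p o * exp ((∑ k ∈ univ.erase o, μ k) - 1 - l) * exp (α * μ j + 1 + l) := by
        rw [tight, h.stationary_marked]
    _ = activityThreshold o p μ * exp (α * μ j) := by
        rw [activityThreshold, mul_assoc, mul_assoc, ← exp_add, ← exp_add]
        ring_nf

lemma activityThreshold_lt_mul (h : IsKKTMultiplier o α p q l μ) (hα : 0 < α) (ho : 0 < p o)
    {j : ι} (hj : j ∈ activeSet o μ) : activityThreshold o p μ < α * p j := by
  rw [h.mul_eq_activityThreshold_mul_exp hj]
  exact lt_mul_of_one_lt_right (activityThreshold_pos ho)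
    (one_lt_exp_iff.2 (mul_pos hα (mem_activeSet.1 hj).2))

lemma activeSet_subset_violatedSet (h : IsKKTMultiplier o α p q l μ) (hα : 0 < α)
    (ho : 0 < p o) : activeSet o μ ⊆ violatedSet o α p := fun _ hj =>
  mem_violatedSet.2 ⟨(mem_activeSet.1 hj).1,
    (h.le_activityThreshold ho.le).trans_lt (h.activityThreshold_lt_mul hα ho hj)⟩

lemma prod_mul_eq (h : IsKKTMultiplier o α p q l μ) {S : Finset ι} (hS : S ⊆ activeSet o μ) :
    ∏ j ∈ S, α * p j = activityThreshold o p μ ^ #S * exp (α * ∑ j ∈ S, μ j) := by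
  rw [prod_congr rfl fun j hj => h.mul_eq_activityThreshold_mul_exp (hS hj),
    prod_mul_distrib, prod_const, ← exp_sum, mul_sum]

lemma sum_le_sum_erase (h : IsKKTMultiplier o α p q l μ) {S : Finset ι}
    (hS : S ⊆ activeSet o μ) : ∑ j ∈ S, μ j ≤ ∑ k ∈ univ.erase o, μ k :=
  sum_le_sum_of_subset_of_nonneg (hS.trans activeSet_subset_erase)
    fun k hk _ => h.nonneg k (ne_of_mem_erase hk)

lemma rpow_mul_prod_le (h : IsKKTMultiplier o α p q l μ) (hα : 0 ≤ α) (ho : 0 < p o)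
    {S : Finset ι} (hS : S ⊆ activeSet o μ) :
    p o ^ α * ∏ j ∈ S, α * p j ≤ activityThreshold o p μ ^ ((#S : ℝ) + α) := by
  have hθ : 0 < activityThreshold o p μ := activityThreshold_pos ho
  calc p o ^ α * ∏ j ∈ S, α * p j
      = activityThreshold o p μ ^ #S * (p o ^ α * exp (α * ∑ j ∈ S, μ j)) := by
        rw [h.prod_mul_eq hS, mul_left_comm]
    _ ≤ activityThreshold o p μ ^ #S * (p o ^ α * exp (α * ∑ k ∈ univ.erase o, μ k)) := by
        gcongr _ * (_ * exp (_ * ?_))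
        exact h.sum_le_sum_erase hS
    _ = activityThreshold o p μ ^ ((#S : ℝ) + α) := by
        rw [← activityThreshold_rpow ho.le, rpow_add hθ, rpow_natCast]

lemma mergedMean_le_activityThreshold (h : IsKKTMultiplier o α p q l μ) (hα : 0 < α)
    (ho : 0 < p o) {S : Finset ι} (hS : S ⊆ activeSet o μ) :
    mergedMean o α p S ≤ activityThreshold o p μ := by
  have hnonneg : 0 ≤ p o ^ α * ∏ j ∈ S, α * p j := by
    rw [h.prod_mul_eq hS]
    have hθ : 0 < activityThreshold o p μ := activityThreshold_pos ho
    positivity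
  rw [mergedMean, one_div]
  exact (rpow_inv_le_iff_of_pos hnonneg (activityThreshold_pos ho).le (by positivity)).2
    (h.rpow_mul_prod_le hα.le ho hS)

lemma notMem_activeSet_of_mul_le_mergedMean (h : IsKKTMultiplier o α p q l μ) (hα : 0 < α)
    (ho : 0 < p o) {S : Finset ι} (hS : S ⊆ activeSet o μ) {k : ι}
    (hk : α * p k ≤ mergedMean o α p S) : k ∉ activeSet o μ := fun hkA =>
  (h.activityThreshold_lt_mul hα ho hkA).not_ge
    (hk.trans (h.mergedMean_le_activityThreshold hα ho hS))

lemma eq_zero_of_notMem_activeSet (h : IsKKTMultiplier o α p q l μ) {k : ι} (hko : k ≠ o)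
    (hk : k ∉ activeSet o μ) : μ k = 0 :=
  (h.nonneg k hko).eq_of_not_lt' fun hμk => hk (mem_activeSet.2 ⟨hko, hμk⟩)

lemma activeSet_eq_of_forall_mul_le_mergedMean (h : IsKKTMultiplier o α p q l μ) (hα : 0 < α)
    (ho : 0 < p o) {S : Finset ι} (hS : S ⊆ activeSet o μ)
    (hle : ∀ k ∈ violatedSet o α p, k ∉ S → α * p k ≤ mergedMean o α p S) :
    activeSet o μ = S := by
  refine Subset.antisymm (fun k hkA => ?_) hS
  by_contra hkS
  have hkB : k ∈ violatedSet o α p := h.activeSet_subset_violatedSet hα ho hkA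
  exact h.notMem_activeSet_of_mul_le_mergedMean hα ho hS (hle k hkB hkS) hkA

end IsKKTMultiplier

theorem statement11_general (hα : 0 < α) (ho : 0 < p o) (h : IsKKTMultiplier o α p q l μ)
    {e : ℕ → ι} (he_mapsTo : Set.MapsTo e (Set.Iio #(violatedSet o α p)) (violatedSet o α p))
    (he_surjOn : Set.SurjOn e (Set.Iio #(violatedSet o α p)) (violatedSet o α p))
    (he_anti : AntitoneOn (p ∘ e) (Set.Iio #(violatedSet o α p)))
    {t : ℕ} (hactive : (range t).image e ⊆ activeSet o μ)
    (hle : α * p (e t) ≤ mergedMean o α p ((range t).image e)) :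
    (∀ s, t ≤ s → s < #(violatedSet o α p) → μ (e s) = 0) ∧
      activeSet o μ = (range t).image e := by
  have tail_le : ∀ s, t ≤ s → s < #(violatedSet o α p) →
      α * p (e s) ≤ mergedMean o α p ((range t).image e) := fun s hts hs =>
    (mul_le_mul_of_nonneg_left (he_anti (hts.trans_lt hs) hs hts) hα.le).trans hle
  constructor
  · intro s hts hs
    exact h.eq_zero_of_notMem_activeSet (mem_violatedSet.1 (he_mapsTo hs)).1
      (h.notMem_activeSet_of_mul_le_mergedMean hα ho hactive (tail_le s hts hs))
  · refine h.activeSet_eq_of_forall_mul_le_mergedMean hα ho hactive fun k hkB hkS => ?_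
    obtain ⟨s, hs, rfl⟩ := he_surjOn hkB
    have hts : t ≤ s := not_lt.1 fun hst => hkS (mem_image_of_mem e (mem_range.2 hst))
    exact tail_le s hts hs

end

/-- Let `2 ≤ t ≤ |B|` and `C = {j₁, …, j_{t-1}} ⊆ A` (where `e` enumerates `B` so that
`p (e 0) ≥ p (e 1) ≥ …`, so `j_s = e (s-1)`). If `g C ≥ α * p (j_t)`, then `j_s ∉ A`
(i.e. `μ (j_s) = 0`) for every `s ∈ {t, …, |B|}`; consequently `A = C`. -/
theorem statement11 (N : ℕ) [NeZero N] (hN : 2 ≤ N) (α : ℝ) (hα : 1 ≤ α)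
    (p : Fin N → ℝ) (hp : ∀ i, 0 < p i) (hps : ∑ i, p i = 1)
    (q : Fin N → ℝ) (hqC : q ∈ C1 N α)
    (hqmin : ∀ r ∈ C1 N α, KLv q p ≤ KLv r p)
    (hquniq : ∀ r, r ∈ C1 N α → (∀ s ∈ C1 N α, KLv r p ≤ KLv s p) → r = q)
    (hqpos : ∀ i, 0 < q i)
    (l : ℝ) (μ : Fin N → ℝ) (hμnn : ∀ j, j ≠ 0 → 0 ≤ μ j)
    (hstat0 : q 0 = p 0 * Real.exp ((∑ k ∈ Finset.univ.erase 0, μ k) - 1 - l))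
    (hstatj : ∀ j, j ≠ 0 → q j = p j * Real.exp (-(α * μ j) - 1 - l))
    (hslack : ∀ j, j ≠ 0 → μ j * (α * q j - q 0) = 0)
    (A : Finset (Fin N)) (hA : A = Finset.univ.filter (fun j : Fin N => j ≠ 0 ∧ 0 < μ j))
    (B : Finset (Fin N)) (hB : B = Finset.univ.filter (fun j : Fin N => j ≠ 0 ∧ p 0 < α * p j))
    (e : ℕ → Fin N)
    (he_mem : ∀ s, s < B.card → e s ∈ B)
    (he_inj : ∀ s s', s < B.card → s' < B.card → e s = e s' → s = s')
    (he_surj : ∀ j ∈ B, ∃ s, s < B.card ∧ e s = j)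
    (he_anti : ∀ s s', s ≤ s' → s' < B.card → p (e s') ≤ p (e s))
    (t : ℕ) (ht2 : 2 ≤ t) (htB : t ≤ B.card)
    (C : Finset (Fin N)) (hC : C = (Finset.range (t - 1)).image e)
    (hCA : C ⊆ A)
    (hge : α * p (e (t - 1)) ≤ gfun α p C) :
    (∀ s, t ≤ s → s ≤ B.card → μ (e (s - 1)) = 0) ∧ A = C := by
  obtain rfl : A = activeSet 0 μ := hA
  obtain rfl : B = violatedSet 0 α p := hB
  subst hC
  have h : IsKKTMultiplier 0 α p q l μ := ⟨hμnn, hstat0, hstatj, hslack⟩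
  obtain ⟨hzero, hAC⟩ := statement11_general (zero_lt_one.trans_le hα) (hp 0) h he_mem he_surj
    (fun s _ s' hs' hss' => he_anti s s' hss' hs') hCA hge
  exact ⟨fun s hts hsB => hzero (s - 1) (by omega) (by omega), hAC⟩
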